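/- For all integers i, r with 0 ≤ r ≤ i + 2n − 2, one has h_i^{(r)} · Δ_n(x) = Σ_{w ∈ S_n} sgn(w) · x_{w(1)}^r · φ_{i+n−1}(x_{w(1)}) · x_{w(2)}^{n−2} · x_{w(3)}^{n−3} ⋯ x_{w(n)}^0, i.e. the antisymmetrization of h_i^{(r)} · x_1^{n−1} x_2^{n−2} ⋯ x_n^0 equals the antisymmetrization of x_1^r φ_{i+n−1}(x_1) x_2^{n−2} ⋯ x_n^0. -/

import Mathlib

open Polynomial Matrix Finset

noncomputable section

variable {K L : Type*} [Field K] [Field L]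

/-- The orthogonal-polynomial sequence: `φ₀ = 1`, `φ₁ = z - a 0`,
`φ_{i+1} = (z - a i)·φ_i - b i·φ_{i-1}` (so `φ_{-1} = 0`). -/
def phi (a b : ℤ → K) : ℕ → Polynomial K
  | 0 => 1
  | 1 => Polynomial.X - Polynomial.C (a 0)
  | (i+2) => (Polynomial.X - Polynomial.C (a (i+1))) * phi a b (i+1)
      - Polynomial.C (b (i+1)) * phi a b i

/-- `φ` with integer index, `0` for negative index. -/
def phiZ (a b : ℤ → K) (m : ℤ) : Polynomial K :=
  if m < 0 then 0 else phi a b m.toNat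

/-- Generalized Schur polynomial `S_λ(y₁,…,y_m|a,b)
  = det(φ_{λ_j+m-j}(y_i)) / ∏_{i<j}(y_i - y_j)` (indices here 0-based). -/
def genS (a b : ℤ → K) (c : K →+* L) {m : ℕ} (y : Fin m → L) (lam : Fin m → ℕ) : L :=
  Matrix.det (Matrix.of fun i j : Fin m =>
      (phi a b (lam j + (m - 1 - (j : ℕ)))).eval₂ c (y i)) /
    ∏ i : Fin m, ∏ j ∈ Finset.Ioi i, (y i - y j)

/-- `h_i = S_{(i)}` for `i ≥ 0`, and `h_i = 0` for `i < 0`. -/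
def genh (a b : ℤ → K) (c : K →+* L) {m : ℕ} (y : Fin m → L) (i : ℤ) : L :=
  if i < 0 then 0 else genS a b c y (fun j => if (j : ℕ) = 0 then i.toNat else 0)

/-- `h_i^{(0)} = h_i`, `h_i^{(r+1)} = h_{i+1}^{(r)} + a(i+m-1)h_i^{(r)} + b(i+m-1)h_{i-1}^{(r)}`. -/
def genhr (a b : ℤ → K) (c : K →+* L) {m : ℕ} (y : Fin m → L) : ℕ → ℤ → L
  | 0, i => genh a b c y i
  | (r+1), i => genhr a b c y r (i+1) + c (a (i + m - 1)) * genhr a b c y r i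
      + c (b (i + m - 1)) * genhr a b c y r (i-1)

/-- The field `F = K(x₁,…,x_n)`. -/
abbrev Fn (K : Type*) [Field K] (n : ℕ) := FractionRing (MvPolynomial (Fin n) K)

/-- The embedding `K → K(x₁,…,x_n)`. -/
def cK (K : Type*) [Field K] (n : ℕ) : K →+* Fn K n :=
  (algebraMap (MvPolynomial (Fin n) K) (Fn K n)).comp MvPolynomial.C

/-- The variables `x₁,…,x_n` as elements of `K(x₁,…,x_n)`. -/
def xv (K : Type*) [Field K] (n : ℕ) (i : Fin n) : Fn K n :=
  algebraMap (MvPolynomial (Fin n) K) (Fn K n) (MvPolynomial.X i)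

lemma phi_monic_natDegree (a b : ℤ → K) (m : ℕ) :
    (phi a b m).Monic ∧ (phi a b m).natDegree = m := by
  induction m using Nat.strong_induction_on with
  | _ m ih =>
    match m with
    | 0 => simp [phi]
    | 1 => exact ⟨monic_X_sub_C _, natDegree_X_sub_C _⟩
    | k + 2 =>
      obtain ⟨hm₁, hd₁⟩ := ih (k + 1) (by omega)
      obtain ⟨-, hd₀⟩ := ih k (by omega)
      have hmonic := (monic_X_sub_C (a (k + 1))).mul hm₁
      have hdeg : ((X - C (a (k + 1))) * phi a b (k + 1)).natDegree = k + 2 := by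
        rw [(monic_X_sub_C _).natDegree_mul hm₁, hd₁, natDegree_X_sub_C]
        omega
      have hlow : (C (b (k + 1)) * phi a b k).natDegree <
          ((X - C (a (k + 1))) * phi a b (k + 1)).natDegree := by
        have := natDegree_C_mul_le (b (k + 1)) (phi a b k)
        omega
      rw [phi]
      exact ⟨hmonic.sub_of_left (degree_lt_degree hlow),
        (natDegree_sub_eq_left_of_natDegree_lt hlow).trans hdeg⟩

lemma phiZ_of_neg (a b : ℤ → K) {m : ℤ} (hm : m < 0) : phiZ a b m = 0 := if_pos hm

lemma phiZ_natCast (a b : ℤ → K) (m : ℕ) : phiZ a b m = phi a b m := by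
  simp [phiZ]

/-- The three-term recurrence holds at every integer index except `-1`, where `φ₀ = 1`
spoils it. -/
lemma X_mul_phiZ (a b : ℤ → K) {m : ℤ} (hm : m ≠ -1) :
    X * phiZ a b m = phiZ a b (m + 1) + C (a m) * phiZ a b m + C (b m) * phiZ a b (m - 1) := by
  rcases lt_or_ge m 0 with h | h
  · rw [phiZ_of_neg a b h, phiZ_of_neg a b (by omega : m + 1 < 0),
      phiZ_of_neg a b (by omega : m - 1 < 0)]
    simp
  · obtain ⟨k, rfl⟩ := Int.eq_ofNat_of_zero_le h
    cases k with
    | zero =>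
      rw [phiZ_of_neg a b (by simp : ((0 : ℕ) : ℤ) - 1 < 0), phiZ_natCast,
        show ((0 : ℕ) : ℤ) + 1 = ((1 : ℕ) : ℤ) by simp, phiZ_natCast]
      simp [phi]
    | succ k =>
      rw [phiZ_natCast, show ((k + 1 : ℕ) : ℤ) + 1 = ((k + 2 : ℕ) : ℤ) by push_cast; ring,
        phiZ_natCast, show ((k + 1 : ℕ) : ℤ) - 1 = (k : ℤ) by push_cast; ring, phiZ_natCast, phi]
      push_cast
      ring

/-- The determinant whose first column is `g` and whose other columns are
`y ^ (N - 1), …, y, 1`. -/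
def borderedVandermonde {N : ℕ} (y g : Fin (N + 1) → L) : L :=
  det (of fun p : Fin (N + 1) =>
    (Fin.cons (g p) fun k : Fin N => y p ^ (N - 1 - (k : ℕ)) : Fin (N + 1) → L))

lemma borderedVandermonde_eq_sum {N : ℕ} (y g : Fin (N + 1) → L) :
    borderedVandermonde y g = ∑ p : Fin (N + 1), (-1) ^ (p : ℕ) * g p *
      det (of fun i j : Fin N => y (p.succAbove i) ^ (N - 1 - (j : ℕ))) := by
  rw [borderedVandermonde, det_succ_column_zero]
  rfl

lemma borderedVandermonde_add {N : ℕ} (y g h : Fin (N + 1) → L) :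
    borderedVandermonde y (g + h) = borderedVandermonde y g + borderedVandermonde y h := by
  simp only [borderedVandermonde_eq_sum, Pi.add_apply, mul_add, add_mul, sum_add_distrib]

lemma borderedVandermonde_smul {N : ℕ} (y : Fin (N + 1) → L) (s : L) (g : Fin (N + 1) → L) :
    borderedVandermonde y (s • g) = s * borderedVandermonde y g := by
  simp only [borderedVandermonde_eq_sum, Pi.smul_apply, smul_eq_mul, mul_sum]
  exact sum_congr rfl fun p _ => by ring

lemma borderedVandermonde_sum {N : ℕ} {ι : Type*} (y : Fin (N + 1) → L) (s : Finset ι)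
    (g : ι → Fin (N + 1) → L) :
    borderedVandermonde y (∑ k ∈ s, g k) = ∑ k ∈ s, borderedVandermonde y (g k) := by
  simp only [borderedVandermonde_eq_sum, Finset.sum_apply, mul_sum, sum_mul]
  exact sum_comm

lemma borderedVandermonde_pow {N k : ℕ} (y : Fin (N + 1) → L) (hk : k < N) :
    borderedVandermonde y (fun p => y p ^ k) = 0 := by
  refine det_zero_of_column_eq (i := 0) (j := Fin.succ ⟨N - 1 - k, by omega⟩)
    (Fin.succ_ne_zero _).symm fun p => ?_
  simp only [of_apply, Fin.cons_zero, Fin.cons_succ]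
  congr 1
  omega

lemma borderedVandermonde_eval₂_of_natDegree_lt {N : ℕ} (c : K →+* L) (y : Fin (N + 1) → L)
    {f : K[X]} (hf : f.natDegree < N) :
    borderedVandermonde y (fun p => f.eval₂ c (y p)) = 0 := by
  have h : (fun p => f.eval₂ c (y p)) =
      ∑ k ∈ range N, c (f.coeff k) • fun p => y p ^ k := by
    ext p
    simp [eval₂_eq_sum_range' c hf]
  rw [h, borderedVandermonde_sum]
  refine sum_eq_zero fun k hk => ?_
  rw [borderedVandermonde_smul, borderedVandermonde_pow y (mem_range.mp hk), mul_zero]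

/-- Replacing powers by the monic polynomials `φ_k` does not change a Vandermonde
determinant. -/
lemma det_eval₂_phi_eq_det_pow {N : ℕ} (a b : ℤ → K) (c : K →+* L) (v : Fin N → L) :
    det (of fun i j : Fin N => (phi a b (N - 1 - (j : ℕ))).eval₂ c (v i)) =
      det (of fun i j : Fin N => v i ^ (N - 1 - (j : ℕ))) := by
  have h := det_eval_matrixOfPolynomials_eq_det_vandermonde v
    (fun k => (phi a b k).map c)
    (fun k => by rw [natDegree_map, (phi_monic_natDegree a b k).2])
    (fun k => (phi_monic_natDegree a b k).1.map c)
  have hsub (j : Fin N) : N - 1 - (j : ℕ) = N - ((j : ℕ) + 1) := by omega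
  have hphi := det_permute' Fin.revPerm
    (of fun i j : Fin N => ((phi a b j).map c).eval (v i))
  have hpow := det_permute' Fin.revPerm (vandermonde v)
  rw [h, ← hphi] at hpow
  simpa [submatrix, vandermonde_apply, eval_map, hsub] using hpow.symm

lemma borderedVandermonde_eq_sum_perm {N : ℕ} (y g : Fin (N + 1) → L) :
    borderedVandermonde y g = ∑ w : Equiv.Perm (Fin (N + 1)), (Equiv.Perm.sign w : ℤ) •
      (g (w 0) * ∏ k ∈ Ioi (0 : Fin (N + 1)), y (w k) ^ (N + 1 - 1 - (k : ℕ))) := by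
  rw [borderedVandermonde, det_apply]
  refine sum_congr rfl fun w _ => ?_
  rw [Fin.prod_univ_succ, Fin.prod_Ioi_zero, Units.smul_def]
  congr 2
  refine prod_congr rfl fun k _ => ?_
  simp only [of_apply, Fin.cons_succ, Fin.val_succ]
  congr 1
  omega

lemma genh_mul_prod {N : ℕ} (a b : ℤ → K) (c : K →+* L) {y : Fin (N + 1) → L}
    (hy : Function.Injective y) {i : ℤ} (hi : 0 ≤ i + 2 * N) :
    genh a b c y i * (∏ p, ∏ q ∈ Ioi p, (y p - y q)) =
      borderedVandermonde y (fun p => (phiZ a b (i + N)).eval₂ c (y p)) := by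
  rcases lt_or_ge i 0 with h | h
  · rw [genh, if_pos h, zero_mul]
    rcases lt_or_ge (i + N) 0 with h' | h'
    · rw [phiZ_of_neg a b h']
      simp [borderedVandermonde_eq_sum]
    · obtain ⟨k, hk⟩ := Int.eq_ofNat_of_zero_le h'
      rw [hk, phiZ_natCast, borderedVandermonde_eval₂_of_natDegree_lt]
      rw [(phi_monic_natDegree a b k).2]
      omega
  · obtain ⟨k, rfl⟩ := Int.eq_ofNat_of_zero_le h
    have hne : ∏ p, ∏ q ∈ Ioi p, (y p - y q) ≠ 0 :=
      prod_ne_zero_iff.mpr fun p _ => prod_ne_zero_iff.mpr fun q hq =>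
        sub_ne_zero.mpr (hy.ne (mem_Ioi.mp hq).ne)
    rw [genh, if_neg (not_lt.mpr h), genS, div_mul_cancel₀ _ hne, det_succ_column_zero,
      borderedVandermonde_eq_sum]
    refine sum_congr rfl fun p _ => ?_
    rw [← det_eval₂_phi_eq_det_pow a b c, ← Nat.cast_add, phiZ_natCast]
    congr 2
    ext s t
    simp only [submatrix_apply, of_apply, Fin.val_succ]
    rw [if_neg (by omega)]
    congr 2
    omega

lemma genhr_mul_prod {N : ℕ} (a b : ℤ → K) (c : K →+* L) {y : Fin (N + 1) → L}
    (hy : Function.Injective y) (r : ℕ) {i : ℤ} (hi : (r : ℤ) ≤ i + 2 * N) :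
    genhr a b c y r i * (∏ p, ∏ q ∈ Ioi p, (y p - y q)) =
      borderedVandermonde y (fun p => y p ^ r * (phiZ a b (i + N)).eval₂ c (y p)) := by
  induction r generalizing i with
  | zero => simpa [genhr] using genh_mul_prod a b c hy (by simpa using hi)
  | succ r ih =>
    push_cast at hi
    have hindex : i + ((N + 1 : ℕ) : ℤ) - 1 = i + N := by push_cast; ring
    rw [genhr, hindex, add_mul, add_mul, mul_assoc, mul_assoc, ih (by omega), ih (by omega),
      ih (by omega), ← borderedVandermonde_smul, ← borderedVandermonde_smul,
      ← borderedVandermonde_add, ← borderedVandermonde_add]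
    by_cases hm : i + (N : ℤ) = -1
    · have h₁ : i + 1 + (N : ℤ) = ((0 : ℕ) : ℤ) := by push_cast; omega
      have h₂ : i - 1 + (N : ℤ) < 0 := by omega
      rw [h₁, phiZ_natCast, phiZ_of_neg a b h₂, phiZ_of_neg a b (by omega : i + (N : ℤ) < 0), phi]
      have hpow := borderedVandermonde_pow y (by omega : r < N)
      have hzero : borderedVandermonde y (fun _ => 0) = 0 := by
        simp [borderedVandermonde_eq_sum]
      simpa [borderedVandermonde_add, borderedVandermonde_smul, hzero] using hpow
    · congr 1
      ext p
      have h := congrArg (fun f => y p ^ r * f.eval₂ c (y p)) (X_mul_phiZ a b hm)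
      simp only [eval₂_add, eval₂_mul, eval₂_X, eval₂_C] at h
      simp only [Pi.add_apply, Pi.smul_apply, smul_eq_mul]
      rw [show i + 1 + (N : ℤ) = i + N + 1 by ring, show i - 1 + (N : ℤ) = i + N - 1 by ring,
        pow_succ]
      linear_combination -h

lemma xv_injective (K : Type*) [Field K] (n : ℕ) : Function.Injective (xv K n) :=
  (IsFractionRing.injective (MvPolynomial (Fin n) K) (Fn K n)).comp MvPolynomial.X_injective

/-- For `0 ≤ r ≤ i + 2n - 2`, the antisymmetrization identity
`h_i^{(r)}·Δ_n(x) = Σ_w sgn(w)·x_{w(1)}^r·φ_{i+n-1}(x_{w(1)})·x_{w(2)}^{n-2}⋯x_{w(n)}^0`. -/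
theorem genhr_antisymmetrization (K : Type*) [Field K] (a b : ℤ → K) (n : ℕ) (hn : 1 ≤ n)
    (i : ℤ) (r : ℕ) (hr2 : (r : ℤ) ≤ i + 2 * n - 2) :
    genhr a b (cK K n) (xv K n) r i *
        (∏ p : Fin n, ∏ q ∈ Finset.Ioi p, (xv K n p - xv K n q)) =
      ∑ w : Equiv.Perm (Fin n),
        ((Equiv.Perm.sign w : ℤ)) •
          (xv K n (w ⟨0, by omega⟩) ^ r *
            (phiZ a b (i + n - 1)).eval₂ (cK K n) (xv K n (w ⟨0, by omega⟩)) *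
            ∏ k ∈ Finset.Ioi (⟨0, by omega⟩ : Fin n),
              xv K n (w k) ^ (n - 1 - (k : ℕ))) := by
  obtain ⟨N, rfl⟩ : ∃ N, n = N + 1 := ⟨n - 1, by omega⟩
  have hindex : i + ((N + 1 : ℕ) : ℤ) - 1 = i + N := by push_cast; ring
  push_cast at hr2
  rw [genhr_mul_prod a b _ (xv_injective K (N + 1)) r (by linarith),
    borderedVandermonde_eq_sum_perm, hindex]
  rfl
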